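/- arXiv:1805.06778 — 2 statements merged into one kernel-verified Lean document; each statement's English description precedes it below -/
import Mathlib

section
/- Let ((e_n),(e_n^*)) be a bounded Markushevich basis of a real Banach space X. Then (e_n) is almost greedy if and only if for every λ with 0 ≤ λ < 1 there exists a constant C such that for every x ∈ X, every m ∈ ℕ, every greedy ordering for x, every finite set A ⊂ ℕ with |A| ≤ m and |A ∩ Λ_m(x)| ≤ λm, and all real scalars (a_i)_{i∈A}, one has ‖x − G_m(x)‖ ≤ C‖x − Σ_{i∈A} a_i e_i‖. -/
/-- A bounded Markushevich basis of a real normed space `X`: a biorthogonal system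
`((e_n), (f_n))` whose vectors have dense linear span, whose functionals separate points,
and which is bounded: `a < ‖e_n‖, ‖f_n‖ < b` for some constants `0 < a < b`. -/
structure BddMarkushevichBasis (X : Type*) [NormedAddCommGroup X] [NormedSpace ℝ X] where
  e : ℕ → X
  f : ℕ → X →L[ℝ] ℝ
  biorth : ∀ m n : ℕ, f m (e n) = if m = n then (1 : ℝ) else 0
  dense_span : Dense (Submodule.span ℝ (Set.range e) : Set X)
  separating : ∀ x y : X, (∀ n : ℕ, f n x = f n y) → x = y
  a : ℝ
  b : ℝ
  ha : 0 < a
  e_bounds : ∀ n : ℕ, a < ‖e n‖ ∧ ‖e n‖ < b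
  f_bounds : ∀ n : ℕ, a < ‖f n‖ ∧ ‖f n‖ < b

namespace BddMarkushevichBasis

variable {X : Type*} [NormedAddCommGroup X] [NormedSpace ℝ X]

/-- The coordinate projection onto a finite set `A` of indices: `P_A x = ∑_{i ∈ A} e_i^*(x) e_i`. -/
noncomputable def P (M : BddMarkushevichBasis X) (A : Finset ℕ) (x : X) : X :=
  ∑ i ∈ A, M.f i x • M.e i

/-- A greedy ordering for `x`: an injection `ρ : ℕ → ℕ` whose range contains the support
of `x` and which rearranges the coordinates of `x` in nonincreasing order of absolute
value. -/
def IsGreedyOrdering (M : BddMarkushevichBasis X) (x : X) (ρ : ℕ → ℕ) : Prop :=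
  Function.Injective ρ ∧ (∀ n : ℕ, M.f n x ≠ 0 → n ∈ Set.range ρ) ∧
    ∀ j k : ℕ, j ≤ k → |M.f (ρ k) x| ≤ |M.f (ρ j) x|

/-- The greedy set `Λ_m(x) = {ρ(0), …, ρ(m-1)}` associated to a greedy ordering `ρ`. -/
def Lam (ρ : ℕ → ℕ) (m : ℕ) : Finset ℕ := (Finset.range m).image ρ

/-- The `m`-th greedy approximation `G_m(x) = ∑_{j < m} e_{ρ(j)}^*(x) e_{ρ(j)}`. -/
noncomputable def G (M : BddMarkushevichBasis X) (x : X) (ρ : ℕ → ℕ) (m : ℕ) : X :=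
  ∑ j ∈ Finset.range m, M.f (ρ j) x • M.e (ρ j)

/-- Almost greedy: `‖x - G_m(x)‖ ≤ C inf{‖x - P_A(x)‖ : |A| ≤ m}`. -/
def AlmostGreedy (M : BddMarkushevichBasis X) : Prop :=
  ∃ C : ℝ, ∀ (x : X) (ρ : ℕ → ℕ) (m : ℕ) (A : Finset ℕ), M.IsGreedyOrdering x ρ →
    A.card ≤ m → ‖x - M.G x ρ m‖ ≤ C * ‖x - M.P A x‖

end BddMarkushevichBasis

open Filter Topology in
/-- A nonnegative sequence tending to zero has a nonincreasing rearrangement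
exhausting its support. -/
theorem exists_antitone_rearrangement (g : ℕ → ℝ) (hg : ∀ n, 0 ≤ g n)
    (hlim : Tendsto g cofinite (𝓝 0)) :
    ∃ ρ : ℕ → ℕ, Function.Injective ρ ∧ (∀ n, g n ≠ 0 → n ∈ Set.range ρ) ∧
      Antitone (g ∘ ρ) := by
  have hpick : ∀ S : Finset ℕ, ∃ n, n ∉ S ∧ ∀ k, k ∉ S → g k ≤ g n := by
    intro S
    by_cases hpos : ∃ n, n ∉ S ∧ 0 < g n
    · obtain ⟨n, hnS, hn⟩ := hpos
      have hfin : {k | g n ≤ g k}.Finite := by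
        have h := hlim.eventually_lt_const hn
        rw [eventually_cofinite] at h
        simpa only [not_lt] using h
      obtain ⟨q, hq, hmax⟩ := (hfin.toFinset \ S).exists_max_image g
        ⟨n, by simp [hnS]⟩
      simp only [Finset.mem_sdiff, Set.Finite.mem_toFinset, Set.mem_ofPred_eq] at hq hmax
      refine ⟨q, hq.2, fun k hk => ?_⟩
      rcases le_total (g n) (g k) with h | h
      · exact hmax k ⟨h, hk⟩
      · exact h.trans hq.1
    · push Not at hpos
      obtain ⟨n, hn⟩ := Infinite.exists_notMem_finset S
      exact ⟨n, hn, fun k hk => (hpos k hk).trans (hg n)⟩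
  choose pick hpick_notMem hpick_max using hpick
  let S : ℕ → Finset ℕ := fun n => Nat.rec ∅ (fun _ T => insert (pick T) T) n
  have hS_succ : ∀ n, S (n + 1) = insert (pick (S n)) (S n) := fun _ => rfl
  have hS_mono : Monotone S := monotone_nat_of_le_succ fun n => by
    rw [hS_succ]; exact Finset.subset_insert _ _
  have hmem : ∀ {j k}, j < k → pick (S j) ∈ S k := fun {j k} hjk =>
    hS_mono (Nat.succ_le_of_lt hjk) (by rw [hS_succ]; exact Finset.mem_insert_self _ _)
  have hinj : Function.Injective fun n => pick (S n) := by
    refine Function.Injective.of_lt_imp_ne fun j k hjk heq => ?_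
    exact hpick_notMem (S k) (heq ▸ hmem hjk)
  refine ⟨fun n => pick (S n), hinj, fun n hn => ?_, fun j k hjk => ?_⟩
  · by_contra hrange
    have hnot : ∀ k, n ∉ S k := by
      intro k
      induction k with
      | zero => simp [S]
      | succ k ih =>
        rw [hS_succ, Finset.mem_insert, not_or]
        exact ⟨fun h => hrange ⟨k, h.symm⟩, ih⟩
    have hle : g n ≤ 0 := ge_of_tendsto (hlim.comp hinj.tendsto_cofinite)
      (Eventually.of_forall fun k => hpick_max (S k) n (hnot k))
    exact hn (le_antisymm hle (hg n))
  · exact hpick_max (S j) _ fun h => hpick_notMem (S k) (hS_mono hjk h)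

namespace BddMarkushevichBasis

variable {X : Type*} [NormedAddCommGroup X] [NormedSpace ℝ X] (M : BddMarkushevichBasis X)

theorem f_sum (n : ℕ) (A : Finset ℕ) (c : ℕ → ℝ) :
    M.f n (∑ i ∈ A, c i • M.e i) = if n ∈ A then c n else 0 := by
  simp [M.biorth]

theorem f_P (n : ℕ) (A : Finset ℕ) (x : X) :
    M.f n (M.P A x) = if n ∈ A then M.f n x else 0 :=
  M.f_sum n A fun i => M.f i x

theorem b_pos : 0 < M.b := M.ha.trans ((M.e_bounds 0).1.trans (M.e_bounds 0).2)

open Filter Topology in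
theorem tendsto_f (x : X) : Tendsto (fun n => M.f n x) cofinite (𝓝 0) := by
  have hspan : ∀ y ∈ Submodule.span ℝ (Set.range M.e),
      Tendsto (fun n => M.f n y) cofinite (𝓝 0) := by
    intro y hy
    induction hy using Submodule.span_induction with
    | mem y hy =>
      obtain ⟨k, rfl⟩ := hy
      refine tendsto_const_nhds.congr' ?_
      filter_upwards [(Set.finite_singleton k).compl_mem_cofinite] with n hn
      rw [M.biorth, if_neg (by simpa using hn)]
    | zero => simp
    | add y z _ _ hy hz => simpa using hy.add hz
    | smul c y _ hy => simpa using hy.const_mul c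
  rw [Metric.tendsto_nhds]
  intro ε hε
  have hb := M.b_pos
  obtain ⟨y, hy, hxy⟩ := M.dense_span.exists_dist_lt x (div_pos (half_pos hε) hb)
  filter_upwards [(Metric.tendsto_nhds.1 (hspan y hy)) (ε / 2) (half_pos hε)] with n hn
  rw [dist_zero_right] at hn ⊢
  rw [dist_eq_norm, lt_div_iff₀ hb] at hxy
  have h1 : ‖M.f n (x - y)‖ ≤ M.b * ‖x - y‖ :=
    (M.f n).le_of_opNorm_le (M.f_bounds n).2.le _
  have h2 : M.f n x = M.f n (x - y) + M.f n y := by simp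
  rw [h2]
  linarith [norm_add_le (M.f n (x - y)) (M.f n y)]

theorem card_Lam {x : X} {ρ : ℕ → ℕ} (h : M.IsGreedyOrdering x ρ) (m : ℕ) :
    (Lam ρ m).card = m := by
  rw [Lam, Finset.card_image_of_injective _ h.1, Finset.card_range]

theorem G_eq_P {x : X} {ρ : ℕ → ℕ} (h : M.IsGreedyOrdering x ρ) (m : ℕ) :
    M.G x ρ m = M.P (Lam ρ m) x := by
  rw [G, P, Lam, Finset.sum_image h.1.injOn]

/-- `Γ` is a greedy set of `x`: the coordinates of `x` on `Γ` dominate those off `Γ`. -/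
def IsGreedySet (x : X) (Γ : Finset ℕ) : Prop :=
  ∀ i ∈ Γ, ∀ j ∉ Γ, |M.f j x| ≤ |M.f i x|

theorem isGreedySet_Lam {x : X} {ρ : ℕ → ℕ} (h : M.IsGreedyOrdering x ρ) (m : ℕ) :
    M.IsGreedySet x (Lam ρ m) := by
  intro i hi j hj
  simp only [Lam, Finset.mem_image, Finset.mem_range] at hi hj
  obtain ⟨k, hk, rfl⟩ := hi
  by_cases h0 : M.f j x = 0
  · simp [h0]
  · obtain ⟨l, rfl⟩ := h.2.1 j h0
    exact h.2.2 k l (hk.le.trans (not_lt.1 fun hl => hj ⟨l, hl, rfl⟩))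

open Filter Topology in
/-- Every greedy set is an initial segment of some greedy ordering. -/
theorem IsGreedySet.exists_ordering {x : X} {Γ : Finset ℕ} (h : M.IsGreedySet x Γ) :
    ∃ ρ, M.IsGreedyOrdering x ρ ∧ Lam ρ Γ.card = Γ := by
  set g : ℕ → ℝ := fun n => |M.f n x| + if n ∈ Γ then 1 else 0
  have hg_in : ∀ n ∈ Γ, g n = |M.f n x| + 1 := fun n hn => by simp [g, hn]
  have hg_out : ∀ n ∉ Γ, g n = |M.f n x| := fun n hn => by simp [g, hn]
  have hlim : Tendsto g cofinite (𝓝 0) := by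
    have h0 := (M.tendsto_f x).abs
    rw [abs_zero] at h0
    refine h0.congr' ?_
    filter_upwards [Γ.finite_toSet.compl_mem_cofinite] with n hn
    exact (hg_out n hn).symm
  obtain ⟨ρ, hinj, hrange, hanti⟩ := exists_antitone_rearrangement g
    (fun n => by simp only [g]; positivity) hlim
  have hdown : ∀ j k, j ≤ k → ρ k ∈ Γ → ρ j ∈ Γ := by
    intro j k hjk hk
    by_contra hj
    have h1 : g (ρ k) ≤ g (ρ j) := hanti hjk
    rw [hg_in _ hk, hg_out _ hj] at h1
    linarith [h _ hk _ hj]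
  have hord : M.IsGreedyOrdering x ρ := by
    refine ⟨hinj, fun n hn => hrange n ?_, fun j k hjk => ?_⟩
    · have := abs_pos.2 hn
      have : 0 < g n := by simp only [g]; positivity
      exact this.ne'
    · have h1 : g (ρ k) ≤ g (ρ j) := hanti hjk
      by_cases hk : ρ k ∈ Γ
      · rw [hg_in _ hk, hg_in _ (hdown j k hjk hk)] at h1
        linarith
      · by_cases hj : ρ j ∈ Γ
        · exact h _ hj _ hk
        · rwa [hg_out _ hk, hg_out _ hj] at h1
  refine ⟨ρ, hord, Eq.symm (Finset.eq_of_subset_of_card_le ?_ (M.card_Lam hord _).le)⟩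
  intro i hi
  obtain ⟨k, rfl⟩ := hrange i (by rw [hg_in i hi]; positivity)
  have hsub : Lam ρ (k + 1) ⊆ Γ := by
    intro n hn
    simp only [Lam, Finset.mem_image, Finset.mem_range] at hn
    obtain ⟨j, hj, rfl⟩ := hn
    exact hdown j k (Nat.lt_succ_iff.1 hj) hi
  have hcard := Finset.card_le_card hsub
  rw [M.card_Lam hord] at hcard
  exact Finset.mem_image_of_mem ρ (Finset.mem_range.2 hcard)

/-- The almost greedy inequality with constant `C`, in terms of greedy sets. -/
def AlmostGreedyWith (C : ℝ) : Prop :=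
  ∀ (x : X) (Γ A : Finset ℕ), M.IsGreedySet x Γ → A.card ≤ Γ.card →
    ‖x - M.P Γ x‖ ≤ C * ‖x - M.P A x‖

variable {M}

theorem AlmostGreedy.exists_almostGreedyWith (h : M.AlmostGreedy) :
    ∃ C, 0 ≤ C ∧ M.AlmostGreedyWith C := by
  obtain ⟨C, hC⟩ := h
  refine ⟨max C 0, le_max_right _ _, fun x Γ A hΓ hA => ?_⟩
  obtain ⟨ρ, hρ, hLam⟩ := hΓ.exists_ordering
  have := hC x ρ Γ.card A hρ hA
  rw [M.G_eq_P hρ, hLam] at this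
  exact this.trans (mul_le_mul_of_nonneg_right (le_max_left _ _) (norm_nonneg _))

theorem AlmostGreedyWith.almostGreedy {C : ℝ} (h : M.AlmostGreedyWith C) : M.AlmostGreedy := by
  refine ⟨C, fun x ρ m A hρ hA => ?_⟩
  rw [M.G_eq_P hρ]
  exact h x _ A (M.isGreedySet_Lam hρ m) (by rwa [M.card_Lam hρ])

variable (M) in
/-- Arbitrarily far out there are sets of any size on which the projection of `z` is small. -/
theorem exists_disjoint_norm_P_le (z : X) (F : Finset ℕ) (k : ℕ) {ε : ℝ} (hε : 0 < ε) :
    ∃ D : Finset ℕ, Disjoint D F ∧ D.card = k ∧ ‖M.P D z‖ ≤ ε := by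
  have hb := M.b_pos
  set δ : ℝ := ε / ((k + 1) * M.b) with hδ_def
  have hδ : 0 < δ := by positivity
  have hev := (Metric.tendsto_nhds.1 (M.tendsto_f z)) δ hδ
  rw [Filter.eventually_cofinite] at hev
  obtain ⟨D, hD, hcard⟩ := (hev.union F.finite_toSet).infinite_compl.exists_subset_card_eq k
  refine ⟨D, Finset.disjoint_left.2 fun i hi hiF => hD hi (Or.inr hiF), hcard, ?_⟩
  have hterm : ∀ i ∈ D, ‖M.f i z • M.e i‖ ≤ δ * M.b := by
    intro i hi
    have h1 : dist (M.f i z) 0 < δ := by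
      by_contra h
      exact hD hi (Or.inl h)
    rw [dist_zero_right] at h1
    rw [norm_smul]
    exact mul_le_mul h1.le (M.e_bounds i).2.le (norm_nonneg _) hδ.le
  calc ‖M.P D z‖ ≤ ∑ _i ∈ D, δ * M.b := norm_sum_le_of_le D hterm
    _ = k * (δ * M.b) := by rw [Finset.sum_const, hcard, nsmul_eq_mul]
    _ ≤ (k + 1) * (δ * M.b) := by gcongr; linarith
    _ = ε := by rw [hδ_def]; field_simp

/-- A vector with coefficients at most `α` on `B` is controlled by any `z` having a greedy set
of size at least `|B|` on which its coordinates are at least `α`. -/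
theorem AlmostGreedyWith.norm_sum_le {C : ℝ} (hM : M.AlmostGreedyWith C) (hC : 0 ≤ C)
    {z : X} {Γ B : Finset ℕ} {α : ℝ} {c : ℕ → ℝ} (hα : 0 ≤ α)
    (hΓ : ∀ i ∈ Γ, α ≤ |M.f i z|) (hΓ' : M.IsGreedySet z Γ) (hc : ∀ i ∈ B, |c i| ≤ α)
    (hB : B.card ≤ Γ.card) :
    ‖∑ i ∈ B, c i • M.e i‖ ≤ 2 * C ^ 2 * ‖z‖ := by
  have key : ∀ ε : ℝ, 0 < ε →
      ‖∑ i ∈ B, c i • M.e i‖ ≤ 2 * C ^ 2 * ‖z‖ + (C ^ 2 + C) * ε := by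
    intro ε hε
    obtain ⟨D, hDdisj, hDcard, hDz⟩ := M.exists_disjoint_norm_P_le z (Γ ∪ B) Γ.card hε
    have hDΓ : ∀ i ∈ D, i ∉ Γ := fun i hi h =>
      Finset.disjoint_left.1 hDdisj hi (Finset.mem_union_left _ h)
    have hDB : ∀ i ∈ D, i ∉ B := fun i hi h =>
      Finset.disjoint_left.1 hDdisj hi (Finset.mem_union_right _ h)
    set u := ∑ i ∈ B, c i • M.e i
    set d := ∑ i ∈ D, α • M.e i
    have hfu : ∀ n, M.f n u = if n ∈ B then c n else 0 := fun n => M.f_sum n B c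
    have hfd : ∀ n, M.f n d = if n ∈ D then α else 0 := fun n => M.f_sum n D fun _ => α
    have hu_le : ‖u‖ ≤ C * ‖d‖ := by
      have hgreedy : M.IsGreedySet (u + d) D := by
        intro i hi j hj
        simp only [map_add, hfu, hfd, if_pos hi, if_neg hj, if_neg (hDB i hi), zero_add,
          add_zero, abs_of_nonneg hα]
        split_ifs with h
        · exact hc j h
        · simpa using hα
      have h := hM (u + d) D B hgreedy (by omega)
      have h1 : u + d - M.P D (u + d) = u := by
        refine M.separating _ _ fun n => ?_
        have := hDB n
        simp only [map_sub, map_add, M.f_P, hfu, hfd]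
        split_ifs <;> simp_all
      have h2 : u + d - M.P B (u + d) = d := by
        refine M.separating _ _ fun n => ?_
        have := hDB n
        simp only [map_sub, map_add, M.f_P, hfu, hfd]
        split_ifs <;> simp_all
      rwa [h1, h2] at h
    have hd_le : ‖d‖ ≤ C * (‖z‖ + ε) + C * ‖z‖ + ε := by
      set y := z - M.P D z + d with hy
      have hfy : ∀ n, M.f n y = if n ∈ D then α else M.f n z := by
        intro n
        simp only [hy, map_add, map_sub, M.f_P, hfd]
        split_ifs <;> simp
      have hgreedy : M.IsGreedySet y Γ := by
        intro i hi j hj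
        have hiD : i ∉ D := fun h => hDΓ i h hi
        rw [hfy, hfy, if_neg hiD]
        split_ifs with h
        · rw [abs_of_nonneg hα]; exact hΓ i hi
        · exact hΓ' i hi j hj
      have h1 := hM y Γ D hgreedy hDcard.le
      have h2 : y - M.P D y = z - M.P D z := by
        refine M.separating _ _ fun n => ?_
        simp only [map_sub, M.f_P, hfy]
        split_ifs <;> simp
      rw [h2] at h1
      have h3 := hM z Γ ∅ hΓ' (by simp)
      simp only [P, Finset.sum_empty, sub_zero] at h3
      have h4 : d = (y - M.P Γ y) - (z - M.P Γ z) + M.P D z := by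
        refine M.separating _ _ fun n => ?_
        have := hDΓ n
        simp only [map_sub, map_add, M.f_P, hfy, hfd]
        split_ifs <;> simp_all
      have h5 : ‖z - M.P D z‖ ≤ ‖z‖ + ε := (norm_sub_le _ _).trans (by gcongr)
      have h6 : ‖d‖ ≤ ‖y - M.P Γ y‖ + ‖z - M.P Γ z‖ + ‖M.P D z‖ := by
        conv_lhs => rw [h4]
        exact (norm_add_le _ _).trans (by gcongr; exact norm_sub_le _ _)
      have h7 := mul_le_mul_of_nonneg_left h5 hC
      simp only [P] at h6 h1 h7 hDz
      linarith
    have := mul_le_mul_of_nonneg_left hd_le hC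
    nlinarith
  refine le_of_forall_pos_le_add fun ε hε => ?_
  refine (key (ε / (C ^ 2 + C + 1)) (by positivity)).trans ?_
  gcongr
  rw [mul_div_assoc', div_le_iff₀ (by positivity)]
  nlinarith

theorem AlmostGreedyWith.norm_sum_le_of_card_le_mul {C : ℝ} (hM : M.AlmostGreedyWith C)
    (hC : 0 ≤ C) {z : X} {Γ : Finset ℕ} {α : ℝ} {c : ℕ → ℝ} (hα : 0 ≤ α)
    (hΓ : ∀ i ∈ Γ, α ≤ |M.f i z|) (hΓ' : M.IsGreedySet z Γ) (N : ℕ) (B : Finset ℕ)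
    (hc : ∀ i ∈ B, |c i| ≤ α) (hB : B.card ≤ N * Γ.card) :
    ‖∑ i ∈ B, c i • M.e i‖ ≤ N * (2 * C ^ 2 * ‖z‖) := by
  induction N generalizing B with
  | zero =>
    have : B = ∅ := by simpa using hB
    simp [this]
  | succ N ih =>
    obtain ⟨T, hTB, hT⟩ := Finset.exists_subset_card_eq (min_le_left B.card Γ.card)
    have h1 := hM.norm_sum_le hC hα hΓ hΓ' (fun i hi => hc i (hTB hi))
      (hT.le.trans (min_le_right _ _))
    have h2 := ih (B \ T) (fun i hi => hc i (Finset.mem_sdiff.1 hi).1) (by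
      rw [Finset.card_sdiff_of_subset hTB, hT]
      rw [add_mul, one_mul] at hB
      omega)
    rw [← Finset.sum_sdiff hTB]
    push_cast
    linarith [norm_add_le (∑ i ∈ B \ T, c i • M.e i) (∑ i ∈ T, c i • M.e i)]

theorem AlmostGreedyWith.norm_sub_P_le {C : ℝ} (hM : M.AlmostGreedyWith C) (hC : 0 ≤ C)
    {x : X} {Γ A : Finset ℕ} (hΓ : M.IsGreedySet x Γ) (N : ℕ)
    (hA : A.card ≤ N * (Γ \ A).card) (a : ℕ → ℝ) :
    ‖x - M.P Γ x‖ ≤ (C + 4 * N * C ^ 2) * ‖x - ∑ i ∈ A, a i • M.e i‖ := by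
  rcases Γ.eq_empty_or_nonempty with rfl | hne
  · have hA0 : A = ∅ := by simpa using hA
    subst hA0
    have := hM x ∅ ∅ hΓ le_rfl
    simp only [P, Finset.sum_empty, sub_zero] at this ⊢
    exact this.trans (by gcongr; linarith [show 0 ≤ 4 * N * C ^ 2 by positivity])
  obtain ⟨q, hq, hmin⟩ := Γ.exists_min_image (fun i => |M.f i x|) hne
  set α := |M.f q x|
  set z := x - ∑ i ∈ A, a i • M.e i with hz
  have hfz : ∀ n, n ∉ A → M.f n z = M.f n x := fun n hn => by
    rw [hz, map_sub, M.f_sum, if_neg hn, sub_zero]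
  set H := (Γ \ A) ∪ A.filter fun i => α < |M.f i z| with hH
  have hH_in : ∀ i ∈ H, α ≤ |M.f i z| := by
    intro i hi
    rw [hH, Finset.mem_union, Finset.mem_sdiff, Finset.mem_filter] at hi
    rcases hi with hi | hi
    · rw [hfz i hi.2]; exact hmin i hi.1
    · exact hi.2.le
  have hH_out : ∀ j ∉ H, |M.f j z| ≤ α := by
    intro j hj
    rw [hH, Finset.mem_union, Finset.mem_sdiff, Finset.mem_filter] at hj
    push Not at hj
    by_cases hjA : j ∈ A
    · exact hj.2 hjA
    · rw [hfz j hjA]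
      exact hΓ q hq j fun h => hjA (hj.1 h)
  have hHgreedy : M.IsGreedySet z H := fun i hi j hj => (hH_out j hj).trans (hH_in i hi)
  have hcard : A.card ≤ N * H.card :=
    hA.trans (Nat.mul_le_mul_left _ (Finset.card_le_card Finset.subset_union_left))
  have h1 := hM z H ∅ hHgreedy (by simp)
  have h2 := hM.norm_sum_le_of_card_le_mul hC (abs_nonneg _) hH_in hHgreedy N A
    (c := fun i => if i ∈ Γ then 0 else M.f i x) (fun i _ => by
      split_ifs with h
      · simp
      · exact hΓ q hq i h) hcard
  have h3 := hM.norm_sum_le_of_card_le_mul hC (abs_nonneg _) hH_in hHgreedy N A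
    (c := fun i => if i ∈ H then 0 else M.f i z) (fun i _ => by
      split_ifs with h
      · simp
      · exact hH_out i h) hcard
  have hdecomp : x - M.P Γ x = (z - M.P H z)
      + ∑ i ∈ A, (if i ∈ Γ then 0 else M.f i x) • M.e i
      - ∑ i ∈ A, (if i ∈ H then 0 else M.f i z) • M.e i := by
    refine M.separating _ _ fun n => ?_
    rw [map_sub, map_sub, map_add, map_sub, M.f_P, M.f_P,
      M.f_sum n A fun i => if i ∈ Γ then 0 else M.f i x,
      M.f_sum n A fun i => if i ∈ H then 0 else M.f i z]
    by_cases hnA : n ∈ A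
    · simp only [if_pos hnA]
      split_ifs <;> ring
    · have hiff : n ∈ H ↔ n ∈ Γ := by simp [hH, hnA]
      simp only [if_neg hnA, hiff, hfz n hnA]
      ring
  have hPe : M.P ∅ z = 0 := by simp [P]
  rw [hPe, sub_zero] at h1
  rw [hdecomp]
  refine (norm_sub_le _ _).trans ((add_le_add_left (norm_add_le _ _) _).trans ?_)
  linarith

/-- Almost greediness only needs to be tested against coefficient sets disjoint from the
greedy set. -/
theorem almostGreedyWith_of_disjoint {C : ℝ}
    (h : ∀ (x : X) (Γ A : Finset ℕ) (a : ℕ → ℝ), M.IsGreedySet x Γ → A.card ≤ Γ.card →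
      Disjoint A Γ → ‖x - M.P Γ x‖ ≤ C * ‖x - ∑ i ∈ A, a i • M.e i‖) :
    M.AlmostGreedyWith C := by
  intro x Γ A hΓ hA
  set y := x - M.P (A ∩ Γ) x with hy
  have hfy : ∀ n, M.f n y = if n ∈ A ∩ Γ then 0 else M.f n x := by
    intro n
    rw [hy, map_sub, M.f_P]
    split_ifs <;> simp
  have hgreedy : M.IsGreedySet y (Γ \ A) := by
    intro i hi j hj
    rw [Finset.mem_sdiff] at hi hj
    rw [hfy, hfy, if_neg fun h => hi.2 (Finset.mem_inter.1 h).1]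
    split_ifs with hj'
    · simp
    · exact hΓ i hi.1 j fun h => hj ⟨h, fun hA => hj' (Finset.mem_inter.2 ⟨hA, h⟩)⟩
  have hcard : (A \ Γ).card ≤ (Γ \ A).card :=
    Finset.card_sdiff_le_card_sdiff_iff.2 hA
  have key := h y (Γ \ A) (A \ Γ) (fun i => M.f i x) hgreedy hcard disjoint_sdiff_sdiff
  have h1 : y - M.P (Γ \ A) y = x - M.P Γ x := by
    refine M.separating _ _ fun n => ?_
    simp only [map_sub, M.f_P, hfy]
    by_cases n ∈ A <;> by_cases n ∈ Γ <;> simp [*]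
  have h2 : y - ∑ i ∈ A \ Γ, M.f i x • M.e i = x - M.P A x := by
    refine M.separating _ _ fun n => ?_
    rw [map_sub _ y, hfy, map_sub, M.f_sum n _ fun i => M.f i x, M.f_P]
    by_cases n ∈ A <;> by_cases n ∈ Γ <;> simp [*]
  rwa [h1, h2] at key

end BddMarkushevichBasis

open BddMarkushevichBasis

/-- A bounded Markushevich basis of a real Banach space is almost greedy
if and only if for every `0 ≤ λ < 1` there is a constant `C` such that
`‖x - G_m(x)‖ ≤ C ‖x - ∑_{i ∈ A} a_i e_i‖` for every `x`, every `m`, every greedy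
ordering for `x`, every finite `A` with `|A| ≤ m` and `|A ∩ Λ_m(x)| ≤ λ m`, and all real
scalars `(a_i)`. -/
theorem stmt_8 {X : Type*} [NormedAddCommGroup X] [NormedSpace ℝ X] [CompleteSpace X]
    (M : BddMarkushevichBasis X) :
    M.AlmostGreedy ↔
      ∀ lam : ℝ, 0 ≤ lam → lam < 1 →
        ∃ C : ℝ, ∀ (x : X) (ρ : ℕ → ℕ) (m : ℕ) (A : Finset ℕ) (a : ℕ → ℝ),
          M.IsGreedyOrdering x ρ → A.card ≤ m →
          ((A ∩ Lam ρ m).card : ℝ) ≤ lam * m →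
          ‖x - M.G x ρ m‖ ≤ C * ‖x - ∑ i ∈ A, a i • M.e i‖ := by
  constructor
  · intro hM lam hlam0 hlam1
    obtain ⟨C, hC, hCM⟩ := hM.exists_almostGreedyWith
    obtain ⟨N, hN⟩ := exists_nat_ge (1 / (1 - lam))
    refine ⟨C + 4 * N * C ^ 2, fun x ρ m A a hρ hA hinter => ?_⟩
    rw [M.G_eq_P hρ]
    refine hCM.norm_sub_P_le hC (M.isGreedySet_Lam hρ m) N ?_ a
    have hsplit := Finset.card_sdiff_add_card_inter (Lam ρ m) A
    rw [M.card_Lam hρ, Finset.inter_comm] at hsplit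
    have hsplit' : ((Lam ρ m \ A).card : ℝ) + ((A ∩ Lam ρ m).card : ℝ) = m := by
      exact_mod_cast hsplit
    rw [div_le_iff₀ (by linarith)] at hN
    have hm : (m : ℝ) ≤ N * (Lam ρ m \ A).card := by
      calc (m : ℝ) = 1 * m := (one_mul _).symm
        _ ≤ N * (1 - lam) * m := by gcongr
        _ = N * ((1 - lam) * m) := mul_assoc _ _ _
        _ ≤ N * (Lam ρ m \ A).card := by gcongr; linarith
    exact hA.trans (by exact_mod_cast hm)
  · intro h
    obtain ⟨C, hC⟩ := h 0 le_rfl one_pos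
    refine (almostGreedyWith_of_disjoint (C := C) fun x Γ A a hΓ hA hAΓ => ?_).almostGreedy
    obtain ⟨ρ, hρ, hLam⟩ := hΓ.exists_ordering
    have hle := hC x ρ Γ.card A a hρ hA (by
      rw [hLam, Finset.disjoint_iff_inter_eq_empty.1 hAΓ]; simp)
    rwa [M.G_eq_P hρ, hLam] at hle
end

section
/- Let X be a real Banach space with a Schauder basis (e_n). Then (e_n) is almost greedy if and only if there exists a constant C such that for every x ∈ X, every m ∈ ℕ, every greedy ordering for x, every a ∈ ℝ, and every finite set A ⊂ ℕ with |A| ≤ m and either max A < α_m(x) or min A > β_m(x), one has ‖x − G_m(x)‖ ≤ C‖x − a·1_A‖. -/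
open Filter Topology

/-- A Schauder basis of a real normed space `X`, given by basis vectors `e n` together with
biorthogonal (coordinate) functionals `f n`, such that every `x` is the limit of its
partial-sum expansion `∑_{n < N} f n x • e n`. -/
structure SchauderBasisSys (X : Type*) [NormedAddCommGroup X] [NormedSpace ℝ X] where
  e : ℕ → X
  f : ℕ → X →L[ℝ] ℝ
  biorth : ∀ m n : ℕ, f m (e n) = if m = n then (1 : ℝ) else 0
  expansion : ∀ x : X,
    Filter.Tendsto (fun N : ℕ => ∑ n ∈ Finset.range N, f n x • e n) Filter.atTop (nhds x)

namespace SchauderBasisSys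

variable {X : Type*} [NormedAddCommGroup X] [NormedSpace ℝ X]

/-- The coordinate projection onto a finite set `A` of indices: `P_A x = ∑_{i ∈ A} e_i^*(x) e_i`. -/
noncomputable def P (S : SchauderBasisSys X) (A : Finset ℕ) (x : X) : X :=
  ∑ i ∈ A, S.f i x • S.e i

/-- The indicator vector `1_A = ∑_{i ∈ A} e_i`. -/
noncomputable def ind (S : SchauderBasisSys X) (A : Finset ℕ) : X :=
  ∑ i ∈ A, S.e i

/-- A greedy ordering for `x`: an injection `ρ : ℕ → ℕ` whose range contains the support of `x`
and which rearranges the coordinates of `x` in nonincreasing order of absolute value. -/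
def IsGreedyOrdering (S : SchauderBasisSys X) (x : X) (ρ : ℕ → ℕ) : Prop :=
  Function.Injective ρ ∧ (∀ n : ℕ, S.f n x ≠ 0 → n ∈ Set.range ρ) ∧
    ∀ j k : ℕ, j ≤ k → |S.f (ρ k) x| ≤ |S.f (ρ j) x|

/-- The greedy set `Λ_m(x) = {ρ(0), …, ρ(m-1)}` associated to a greedy ordering `ρ`. -/
def Lam (ρ : ℕ → ℕ) (m : ℕ) : Finset ℕ := (Finset.range m).image ρ

/-- The `m`-th greedy approximation `G_m(x) = ∑_{j < m} e_{ρ(j)}^*(x) e_{ρ(j)}`. -/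
noncomputable def G (S : SchauderBasisSys X) (x : X) (ρ : ℕ → ℕ) (m : ℕ) : X :=
  ∑ j ∈ Finset.range m, S.f (ρ j) x • S.e (ρ j)

/-- Quasi-greedy: `‖G_m(x)‖ ≤ K ‖x‖` uniformly. -/
def QuasiGreedy (S : SchauderBasisSys X) : Prop :=
  ∃ K : ℝ, ∀ (x : X) (ρ : ℕ → ℕ) (m : ℕ),
    S.IsGreedyOrdering x ρ → ‖S.G x ρ m‖ ≤ K * ‖x‖

/-- Conservative: `‖1_A‖ ≤ Γ ‖1_B‖` whenever `|A| ≤ |B|` and `max A < min B`. -/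
def Conservative (S : SchauderBasisSys X) : Prop :=
  ∃ Γ : ℝ, ∀ A B : Finset ℕ, A.card ≤ B.card →
    (∀ i ∈ A, ∀ j ∈ B, i < j) → ‖S.ind A‖ ≤ Γ * ‖S.ind B‖

/-- Reverse conservative: `‖1_A‖ ≤ Γ ‖1_B‖` whenever `|A| ≤ |B|` and `max B < min A`. -/
def ReverseConservative (S : SchauderBasisSys X) : Prop :=
  ∃ Γ : ℝ, ∀ A B : Finset ℕ, A.card ≤ B.card →
    (∀ i ∈ A, ∀ j ∈ B, j < i) → ‖S.ind A‖ ≤ Γ * ‖S.ind B‖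

/-- Partially greedy: `‖x - G_m(x)‖ ≤ C ‖∑_{n ≥ m} e_n^*(x) e_n‖ = C ‖x - P_{[0,m)}(x)‖`. -/
def PartiallyGreedy (S : SchauderBasisSys X) : Prop :=
  ∃ C : ℝ, ∀ (x : X) (ρ : ℕ → ℕ) (m : ℕ), S.IsGreedyOrdering x ρ →
    ‖x - S.G x ρ m‖ ≤ C * ‖x - S.P (Finset.range m) x‖

/-- Almost greedy: `‖x - G_m(x)‖ ≤ C inf{‖x - P_A(x)‖ : |A| ≤ m}`. -/
def AlmostGreedy (S : SchauderBasisSys X) : Prop :=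
  ∃ C : ℝ, ∀ (x : X) (ρ : ℕ → ℕ) (m : ℕ) (A : Finset ℕ), S.IsGreedyOrdering x ρ →
    A.card ≤ m → ‖x - S.G x ρ m‖ ≤ C * ‖x - S.P A x‖

end SchauderBasisSys

namespace SchauderBasisSys

variable {X : Type*} [NormedAddCommGroup X] [NormedSpace ℝ X] (S : SchauderBasisSys X)

/-- `H` is a greedy set of `x`: coordinates inside `H` dominate those outside. -/
def IsGreedySet (x : X) (H : Finset ℕ) : Prop :=
  ∀ h ∈ H, ∀ n ∉ H, |S.f n x| ≤ |S.f h x|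

lemma f_sum_smul (c : ℕ → ℝ) (A : Finset ℕ) (n : ℕ) :
    S.f n (∑ i ∈ A, c i • S.e i) = if n ∈ A then c n else 0 := by
  simp [map_sum, S.biorth]

lemma f_P (A : Finset ℕ) (x : X) (n : ℕ) :
    S.f n (S.P A x) = if n ∈ A then S.f n x else 0 :=
  S.f_sum_smul (fun i => S.f i x) A n

lemma f_ind (A : Finset ℕ) (n : ℕ) : S.f n (S.ind A) = if n ∈ A then 1 else 0 := by
  simpa [ind] using S.f_sum_smul (fun _ => 1) A n

lemma P_sub (A : Finset ℕ) (x y : X) : S.P A (x - y) = S.P A x - S.P A y := by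
  simp [P, sub_smul, Finset.sum_sub_distrib]

lemma P_congr {A : Finset ℕ} {x y : X} (h : ∀ n ∈ A, S.f n x = S.f n y) :
    S.P A x = S.P A y :=
  Finset.sum_congr rfl fun n hn => by rw [h n hn]

lemma P_union {A B : Finset ℕ} (h : Disjoint A B) (x : X) :
    S.P (A ∪ B) x = S.P A x + S.P B x :=
  Finset.sum_union h

lemma P_eq_smul_ind {A : Finset ℕ} {x : X} {b : ℝ} (h : ∀ n ∈ A, S.f n x = b) :
    S.P A x = b • S.ind A := by
  rw [ind, Finset.smul_sum]
  exact Finset.sum_congr rfl fun n hn => by rw [h n hn]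

lemma P_empty (x : X) : S.P ∅ x = 0 := Finset.sum_empty

lemma ind_empty : S.ind ∅ = 0 := Finset.sum_empty

lemma ind_singleton (n : ℕ) : S.ind {n} = S.e n := Finset.sum_singleton _ _

lemma e_ne_zero (n : ℕ) : S.e n ≠ 0 := fun h => by
  have := S.biorth n n
  simp [h] at this

/-! ### Greedy orderings and greedy sets -/

/-- A sequence tending to zero has a decreasing rearrangement. -/
lemma exists_decreasing_rearrangement {g : ℕ → ℝ} (hg0 : ∀ n, 0 ≤ g n)
    (hg : Tendsto g atTop (𝓝 0)) :
    ∃ ρ : ℕ → ℕ, Function.Injective ρ ∧ (∀ n, g n ≠ 0 → n ∈ Set.range ρ) ∧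
      ∀ j k, j ≤ k → g (ρ k) ≤ g (ρ j) := by
  have finite_ge : ∀ c > 0, {n | c ≤ g n}.Finite := fun c hc => by
    have h := hg.eventually (gt_mem_nhds hc)
    rw [← Nat.cofinite_eq_atTop, Filter.eventually_cofinite] at h
    simpa using h
  have exists_max : ∀ T : Finset ℕ, ∃ n ∉ T, ∀ k ∉ T, g k ≤ g n := fun T => by
    by_cases hT : ∃ n ∉ T, 0 < g n
    · obtain ⟨n, hnT, hn⟩ := hT
      obtain ⟨m, hm, hmax⟩ := ((finite_ge _ hn).subset
        (t := {k | g n ≤ g k ∧ k ∉ T}) fun k hk => hk.1).exists_maximalFor g _ ⟨n, le_rfl, hnT⟩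
      refine ⟨m, hm.2, fun k hk => ?_⟩
      by_contra! hlt
      exact absurd (hmax ⟨hm.1.trans hlt.le, hk⟩ hlt.le) (not_le.2 hlt)
    · push Not at hT
      obtain ⟨n, hn⟩ := Infinite.exists_notMem_finset T
      exact ⟨n, hn, fun k hk => (hT k hk).trans (hg0 n)⟩
  choose M hM hMmax using exists_max
  let T : ℕ → Finset ℕ := fun k => Nat.rec ∅ (fun _ s => insert (M s) s) k
  have T_succ : ∀ k, T (k + 1) = insert (M (T k)) (T k) := fun _ => rfl
  have T_mono : Monotone T := monotone_nat_of_le_succ fun k => by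
    rw [T_succ]; exact Finset.subset_insert _ _
  have hinj : Function.Injective fun k => M (T k) := by
    refine Function.Injective.of_lt_imp_ne fun j k hjk h => hM (T k) ?_
    rw [← h]
    exact T_mono (Nat.succ_le_of_lt hjk) (by simp [T_succ])
  refine ⟨fun k => M (T k), hinj, fun n hn => ?_, fun j k hjk =>
    hMmax _ _ fun h => hM _ (T_mono hjk h)⟩
  by_contra hrange
  have hnT : ∀ k, n ∉ T k := fun k => by
    induction k with
    | zero => exact Finset.notMem_empty n
    | succ k ih =>
      rw [T_succ, Finset.mem_insert, not_or]
      exact ⟨fun h => hrange ⟨k, h.symm⟩, ih⟩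
  refine Set.infinite_range_of_injective hinj
    ((finite_ge (g n) (lt_of_le_of_ne (hg0 n) hn.symm)).subset ?_)
  rintro _ ⟨k, rfl⟩
  exact hMmax _ _ (hnT k)

variable {S}

lemma card_Lam {ρ : ℕ → ℕ} (hρ : Function.Injective ρ) (m : ℕ) : (Lam ρ m).card = m := by
  rw [Lam, Finset.card_image_of_injective _ hρ, Finset.card_range]

lemma IsGreedyOrdering.G_eq {x : X} {ρ : ℕ → ℕ} (hρ : S.IsGreedyOrdering x ρ) (m : ℕ) :
    S.G x ρ m = S.P (Lam ρ m) x := by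
  rw [G, P, Lam, Finset.sum_image fun _ _ _ _ h => hρ.1 h]

lemma IsGreedyOrdering.isGreedySet {x : X} {ρ : ℕ → ℕ} (hρ : S.IsGreedyOrdering x ρ) (m : ℕ) :
    S.IsGreedySet x (Lam ρ m) := by
  intro h hh n hn
  obtain ⟨j, hj, rfl⟩ := Finset.mem_image.1 hh
  by_cases h0 : S.f n x = 0
  · simp [h0]
  obtain ⟨k, rfl⟩ := hρ.2.1 n h0
  refine hρ.2.2 j k (le_of_lt ?_)
  by_contra! hkj
  exact hn (Finset.mem_image_of_mem _
    (Finset.mem_range.2 (hkj.trans_lt (Finset.mem_range.1 hj))))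

/-- Every greedy set of a vector with null coordinates arises from a greedy ordering. -/
lemma IsGreedySet.exists_ordering {x : X} {H : Finset ℕ} (hH : S.IsGreedySet x H)
    (hx : Tendsto (fun n => S.f n x) atTop (𝓝 0)) :
    ∃ ρ, S.IsGreedyOrdering x ρ ∧ Lam ρ H.card = H := by
  have htend : Tendsto (fun n => |S.f n x| + if n ∈ H then 1 else 0) atTop (𝓝 0) := by
    have h0 : Tendsto (fun n => if n ∈ H then (1 : ℝ) else 0) atTop (𝓝 0) := by
      refine tendsto_const_nhds.congr' ?_
      rw [← Nat.cofinite_eq_atTop]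
      filter_upwards [H.finite_toSet.compl_mem_cofinite] with n hn
      rw [if_neg (by simpa using hn)]
    simpa using hx.abs.add h0
  obtain ⟨ρ, hinj, hrange, hmono⟩ := exists_decreasing_rearrangement
    (fun n => add_nonneg (abs_nonneg _) (by split_ifs <;> norm_num)) htend
  have hfirst : ∀ j k, j ≤ k → ρ k ∈ H → ρ j ∈ H := fun j k hjk hk => by
    by_contra hj
    have h1 := hmono j k hjk
    have h2 := hH _ hk _ hj
    simp only [hk, hj, if_true, if_false] at h1
    linarith
  refine ⟨ρ, ⟨hinj, fun n hn => hrange n ?_, fun j k hjk => ?_⟩, ?_⟩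
  · have := abs_pos.2 hn
    split_ifs <;> positivity
  · have h1 := hmono j k hjk
    by_cases hk : ρ k ∈ H
    · simpa [hk, hfirst j k hjk hk] using h1
    · by_cases hj : ρ j ∈ H
      · exact hH _ hj _ hk
      · simpa [hk, hj] using h1
  · refine (Finset.eq_of_subset_of_card_le (fun h hh => ?_) (card_Lam hinj _).le).symm
    obtain ⟨k, rfl⟩ := hrange h (by simp only [hh, if_true]; positivity)
    refine Finset.mem_image_of_mem _ (Finset.mem_range.2 ?_)
    have hsub : Lam ρ (k + 1) ⊆ H := fun i hi => by
      obtain ⟨j, hj, rfl⟩ := Finset.mem_image.1 hi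
      exact hfirst j k (Nat.lt_succ_iff.1 (Finset.mem_range.1 hj)) hh
    have := Finset.card_le_card hsub
    rw [card_Lam hinj] at this
    omega

/-- The coordinates of every vector vanish at infinity if the basis is bounded below. -/
lemma tendsto_f_zero {C : ℝ} (hC : ∀ j, 0 < j → ‖S.e 0‖ ≤ C * ‖S.e j‖) (x : X) :
    Tendsto (fun n => S.f n x) atTop (𝓝 0) := by
  have h0 : 0 < ‖S.e 0‖ := norm_pos_iff.2 (S.e_ne_zero 0)
  have hterm : Tendsto (fun n => S.f n x • S.e n) atTop (𝓝 0) := by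
    have h := ((tendsto_add_atTop_iff_nat 1).2 (S.expansion x)).sub (S.expansion x)
    simpa [Finset.sum_range_succ] using h
  have hbound : Tendsto (fun n => C / ‖S.e 0‖ * ‖S.f n x • S.e n‖) atTop (𝓝 0) := by
    simpa using hterm.norm.const_mul (C / ‖S.e 0‖)
  refine squeeze_zero_norm' ?_ hbound
  filter_upwards [eventually_gt_atTop 0] with n hn
  rw [norm_smul, div_mul_eq_mul_div, le_div_iff₀ h0]
  calc ‖S.f n x‖ * ‖S.e 0‖ ≤ ‖S.f n x‖ * (C * ‖S.e n‖) := by gcongr; exact hC n hn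
    _ = C * (‖S.f n x‖ * ‖S.e n‖) := by ring

/-- For `0 < j`, the singleton `{j}` is generated by a greedy ordering of `e 0 + e j`. -/
lemma exists_ordering_pair {j : ℕ} (hj : 0 < j) :
    ∃ ρ, S.IsGreedyOrdering (S.e 0 + S.e j) ρ ∧ Lam ρ 1 = {j} := by
  have hf : ∀ n, S.f n (S.e 0 + S.e j) = (if n = 0 then 1 else 0) + if n = j then 1 else 0 :=
    fun n => by rw [map_add, S.biorth, S.biorth]
  have hgreedy : S.IsGreedySet (S.e 0 + S.e j) {j} := by
    intro h hh n hn
    rw [Finset.mem_singleton] at hh hn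
    subst hh
    rw [hf, hf, if_neg hn, if_neg hj.ne', if_pos rfl]
    split_ifs <;> norm_num
  have htend : Tendsto (fun n => S.f n (S.e 0 + S.e j)) atTop (𝓝 0) := by
    refine tendsto_const_nhds.congr' ?_
    filter_upwards [eventually_gt_atTop j] with n hn
    rw [hf, if_neg (by omega), if_neg (by omega), add_zero]
  exact hgreedy.exists_ordering htend

lemma P_pair_left {j : ℕ} (hj : 0 < j) : S.P {0} (S.e 0 + S.e j) = S.e 0 := by
  simp [P, S.biorth, hj.ne]

lemma P_pair_right {j : ℕ} (hj : 0 < j) : S.P {j} (S.e 0 + S.e j) = S.e j := by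
  simp [P, S.biorth, hj.ne']

/-! ### Set formulations of the two conditions -/

/-- The almost greedy inequality over greedy sets, with constant `C`. -/
def AlmostGreedyOnSets (S : SchauderBasisSys X) (C : ℝ) : Prop :=
  ∀ (x : X) (H A : Finset ℕ), S.IsGreedySet x H → A.card ≤ H.card →
    ‖x - S.P H x‖ ≤ C * ‖x - S.P A x‖

/-- Comparison, over greedy sets, with constant-coefficient approximations supported entirely
to the left or entirely to the right of the greedy set. -/
def OneSidedGreedyOnSets (S : SchauderBasisSys X) (C : ℝ) : Prop :=
  ∀ (x : X) (H : Finset ℕ) (a : ℝ) (A : Finset ℕ), S.IsGreedySet x H → A.card ≤ H.card →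
    ((∀ i ∈ A, ∀ j ∈ H, i < j) ∨ (∀ i ∈ A, ∀ j ∈ H, j < i)) →
    ‖x - S.P H x‖ ≤ C * ‖x - a • S.ind A‖

lemma almostGreedy_iff : S.AlmostGreedy ↔ ∃ C, 0 ≤ C ∧ S.AlmostGreedyOnSets C := by
  constructor
  · rintro ⟨C, hC⟩
    have hlow : ∀ j, 0 < j → ‖S.e 0‖ ≤ C * ‖S.e j‖ := fun j hj => by
      obtain ⟨ρ, hρ, hL⟩ := S.exists_ordering_pair hj
      simpa [hρ.G_eq, hL, P_pair_left hj, P_pair_right hj] using hC _ ρ 1 {0} hρ (by simp)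
    refine ⟨|C|, abs_nonneg C, fun x H A hH hA => ?_⟩
    obtain ⟨ρ, hρ, hL⟩ := hH.exists_ordering (tendsto_f_zero hlow x)
    have h := hC x ρ _ A hρ hA
    rw [hρ.G_eq, hL] at h
    exact h.trans (mul_le_mul_of_nonneg_right (le_abs_self C) (norm_nonneg _))
  · rintro ⟨C, -, hC⟩
    refine ⟨C, fun x ρ m A hρ hA => ?_⟩
    rw [hρ.G_eq]
    exact hC x _ A (hρ.isGreedySet m) (by rwa [card_Lam hρ.1])

lemma oneSidedGreedy_iff :
    (∃ C : ℝ, ∀ (x : X) (ρ : ℕ → ℕ) (m : ℕ) (a : ℝ) (A : Finset ℕ),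
        S.IsGreedyOrdering x ρ → A.card ≤ m →
        ((∀ i ∈ A, ∀ j ∈ Lam ρ m, i < j) ∨ (∀ i ∈ A, ∀ j ∈ Lam ρ m, j < i)) →
        ‖x - S.G x ρ m‖ ≤ C * ‖x - a • S.ind A‖) ↔
      ∃ C, 0 ≤ C ∧ S.OneSidedGreedyOnSets C := by
  constructor
  · rintro ⟨C, hC⟩
    have hlow : ∀ j, 0 < j → ‖S.e 0‖ ≤ C * ‖S.e j‖ := fun j hj => by
      obtain ⟨ρ, hρ, hL⟩ := S.exists_ordering_pair hj
      simpa [hρ.G_eq, hL, P_pair_right hj, ind_singleton] using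
        hC _ ρ 1 1 {0} hρ (by simp) (Or.inl (by simpa [hL] using hj))
    refine ⟨|C|, abs_nonneg C, fun x H a A hH hA hside => ?_⟩
    obtain ⟨ρ, hρ, hL⟩ := hH.exists_ordering (tendsto_f_zero hlow x)
    have h := hC x ρ _ a A hρ hA (by rwa [hL])
    rw [hρ.G_eq, hL] at h
    exact h.trans (mul_le_mul_of_nonneg_right (le_abs_self C) (norm_nonneg _))
  · rintro ⟨C, -, hC⟩
    refine ⟨C, fun x ρ m a A hρ hA hside => ?_⟩
    rw [hρ.G_eq]
    exact hC x _ a A (hρ.isGreedySet m) (by rwa [card_Lam hρ.1]) hside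

/-! ### The equivalence -/

lemma exists_norm_P_Ico_le (S : SchauderBasisSys X) (y : X) (m N : ℕ) :
    ∃ K, N ≤ K ∧ ‖S.P (Finset.Ico K (K + m)) y‖ ≤ ‖y‖ := by
  rcases eq_or_ne y 0 with rfl | hy
  · exact ⟨N, le_rfl, by simp [P]⟩
  have h : Tendsto (fun K => S.P (Finset.Ico K (K + m)) y) atTop (𝓝 0) := by
    have h := ((tendsto_add_atTop_iff_nat m).2 (S.expansion y)).sub (S.expansion y)
    rw [sub_self] at h
    refine h.congr fun K => ?_
    rw [P, Finset.sum_Ico_eq_sub _ (Nat.le_add_right K m)]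
  have hev := h.norm.eventually (gt_mem_nhds (by simpa using hy : ‖(0 : X)‖ < ‖y‖))
  obtain ⟨K, hK, hNK⟩ := (hev.and (eventually_ge_atTop N)).exists
  exact ⟨K, hNK, hK.le⟩

/-- A far-away indicator of the same size as a greedy set, scaled by a lower bound for the
coordinates on that set, is dominated by the vector. -/
lemma exists_far_ind_le {C : ℝ} (hC0 : 0 ≤ C)
    (hC : ∀ (x : X) (H F : Finset ℕ) (b : ℝ), S.IsGreedySet x H → F.card ≤ H.card →
      (∀ i ∈ F, ∀ j ∈ H, j < i) → (∀ n ∈ F, S.f n x = b) →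
      ‖x - S.P H x‖ ≤ C * ‖x - b • S.ind F‖)
    {y : X} {H : Finset ℕ} {b : ℝ} (hH : S.IsGreedySet y H) (hb0 : 0 ≤ b)
    (hb : ∀ h ∈ H, b ≤ |S.f h y|) (A : Finset ℕ) :
    ∃ F : Finset ℕ, F.card = H.card ∧ (∀ i ∈ A, ∀ j ∈ F, i < j) ∧
      b * ‖S.ind F‖ ≤ 4 * C * ‖y‖ := by
  obtain ⟨K, hK, hPK⟩ := S.exists_norm_P_Ico_le y H.card ((A ∪ H).sup id + 1)
  set F := Finset.Ico K (K + H.card) with hF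
  have hfar : ∀ i ∈ A ∪ H, ∀ j ∈ F, i < j := fun i hi j hj => by
    have h1 : i ≤ (A ∪ H).sup id := Finset.le_sup (f := id) hi
    have h2 := (Finset.mem_Ico.1 hj).1
    omega
  have hcard : F.card = H.card := by simp [hF]
  have hHF : ∀ h ∈ H, h ∉ F := fun h hh hhF =>
    lt_irrefl h (hfar h (Finset.mem_union_right _ hh) h hhF)
  set w := y - S.P F y with hw
  have hfw : ∀ n, S.f n w = if n ∈ F then 0 else S.f n y := fun n => by
    rw [hw, map_sub, f_P]; split_ifs <;> simp
  have hfv : ∀ n, S.f n (w + b • S.ind F) = if n ∈ F then b else S.f n y := fun n => by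
    rw [map_add, map_smul, hfw, f_ind]; split_ifs <;> simp
  have hwH : S.IsGreedySet w H := fun h hh n hn => by
    rw [hfw, hfw, if_neg (hHF h hh)]
    split_ifs
    · simp
    · exact hH h hh n hn
  have hvH : S.IsGreedySet (w + b • S.ind F) H := fun h hh n hn => by
    rw [hfv, hfv, if_neg (hHF h hh)]
    split_ifs
    · rw [abs_of_nonneg hb0]; exact hb h hh
    · exact hH h hh n hn
  have h1 := hC w H ∅ 0 hwH (by simp) (by simp) (by simp)
  have h2 := hC (w + b • S.ind F) H F b hvH hcard.le
    (fun i hi j hj => hfar j (Finset.mem_union_right _ hj) i hi)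
    (fun n hn => by rw [hfv, if_pos hn])
  rw [zero_smul, sub_zero] at h1
  rw [add_sub_cancel_right] at h2
  have hPH : S.P H (w + b • S.ind F) = S.P H w :=
    S.P_congr fun n hn => by rw [hfv, hfw, if_neg (hHF n hn), if_neg (hHF n hn)]
  rw [hPH] at h2
  have hw2 : ‖w‖ ≤ 2 * ‖y‖ := (norm_sub_le _ _).trans (by linarith)
  refine ⟨F, hcard, fun i hi => hfar i (Finset.mem_union_left _ hi), ?_⟩
  calc b * ‖S.ind F‖ = ‖(w + b • S.ind F - S.P H w) - (w - S.P H w)‖ := by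
        rw [show (w + b • S.ind F - S.P H w) - (w - S.P H w) = b • S.ind F by abel, norm_smul,
          Real.norm_of_nonneg hb0]
    _ ≤ C * ‖w‖ + C * ‖w‖ := (norm_sub_le _ _).trans (add_le_add h2 h1)
    _ ≤ 4 * C * ‖y‖ := by nlinarith

/-- Sums with coefficients in `[0, 1]` are convex combinations of subset sums. -/
lemma norm_add_sum_smul_le {u : ℕ → X} {t : ℕ → ℝ} {M : ℝ} {E : Finset ℕ}
    (ht : ∀ i ∈ E, 0 ≤ t i ∧ t i ≤ 1) (v : X)
    (h : ∀ E' ⊆ E, ‖v + ∑ i ∈ E', u i‖ ≤ M) : ‖v + ∑ i ∈ E, t i • u i‖ ≤ M := by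
  classical
  induction E using Finset.induction_on generalizing v with
  | empty => simpa using h ∅ subset_rfl
  | insert a E ha ih =>
    obtain ⟨h0, h1⟩ := ht a (Finset.mem_insert_self a E)
    have htE : ∀ i ∈ E, 0 ≤ t i ∧ t i ≤ 1 := fun i hi => ht i (Finset.mem_insert_of_mem hi)
    have hv := ih htE v fun E' hE' => h E' (hE'.trans (Finset.subset_insert a E))
    have hva := ih htE (v + u a) fun E' hE' => by
      have := h (insert a E') (Finset.insert_subset_insert a hE')
      rwa [Finset.sum_insert fun haE => ha (hE' haE), ← add_assoc] at this
    rw [Finset.sum_insert ha]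
    calc ‖v + (t a • u a + ∑ i ∈ E, t i • u i)‖
        = ‖(1 - t a) • (v + ∑ i ∈ E, t i • u i) + t a • (v + u a + ∑ i ∈ E, t i • u i)‖ := by
          congr 1; module
      _ ≤ (1 - t a) * M + t a * M := by
          refine (norm_add_le _ _).trans ?_
          rw [norm_smul, norm_smul, Real.norm_of_nonneg h0, Real.norm_of_nonneg (sub_nonneg.2 h1)]
          gcongr
      _ = M := by ring

lemma norm_sum_smul_le {u : ℕ → X} {c : ℕ → ℝ} {b M : ℝ} {E : Finset ℕ} (hb : 0 ≤ b)
    (hc : ∀ i ∈ E, |c i| ≤ b) (h : ∀ E' ⊆ E, b * ‖∑ i ∈ E', u i‖ ≤ M) :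
    ‖∑ i ∈ E, c i • u i‖ ≤ 2 * M := by
  have hpart : ∀ d : ℕ → ℝ, (∀ i ∈ E, 0 ≤ d i ∧ d i ≤ b) → ‖∑ i ∈ E, d i • u i‖ ≤ M := by
    intro d hd
    have key := norm_add_sum_smul_le (u := fun i => b • u i) (t := fun i => d i / b) (M := M)
      (E := E) (fun i hi => ⟨div_nonneg (hd i hi).1 hb, div_le_one_of_le₀ (hd i hi).2 hb⟩) 0
      (fun E' hE' => by
        rw [zero_add, ← Finset.smul_sum, norm_smul, Real.norm_of_nonneg hb]
        exact h E' hE')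
    rw [zero_add] at key
    refine (congrArg norm (Finset.sum_congr rfl fun i hi => ?_)).trans_le key
    rw [smul_smul, div_mul_cancel_of_imp]
    rintro rfl
    exact le_antisymm (hd i hi).2 (hd i hi).1
  have h1 := hpart (fun i => max (c i) 0) fun i hi =>
    ⟨le_max_right _ _, max_le ((le_abs_self _).trans (hc i hi)) hb⟩
  have h2 := hpart (fun i => max (-c i) 0) fun i hi =>
    ⟨le_max_right _ _, max_le ((neg_le_abs _).trans (hc i hi)) hb⟩
  have hsplit : ∑ i ∈ E, c i • u i =
      ∑ i ∈ E, max (c i) 0 • u i - ∑ i ∈ E, max (-c i) 0 • u i := by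
    rw [← Finset.sum_sub_distrib]
    refine Finset.sum_congr rfl fun i _ => ?_
    rw [← sub_smul, max_zero_sub_max_neg_zero_eq_self]
  rw [hsplit, two_mul]
  exact (norm_sub_le _ _).trans (add_le_add h1 h2)

lemma IsGreedySet.exists_threshold {x : X} {H : Finset ℕ} (hH : S.IsGreedySet x H)
    (hne : H.Nonempty) :
    ∃ b, 0 ≤ b ∧ (∀ h ∈ H, b ≤ |S.f h x|) ∧ ∀ n ∉ H, |S.f n x| ≤ b := by
  obtain ⟨h₀, hh₀, hmin⟩ := H.exists_min_image (fun h => |S.f h x|) hne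
  exact ⟨|S.f h₀ x|, abs_nonneg _, hmin, hH h₀ hh₀⟩

lemma isGreedySet_of_threshold {x : X} {H : Finset ℕ} {b : ℝ}
    (h1 : ∀ h ∈ H, b ≤ |S.f h x|) (h2 : ∀ n ∉ H, |S.f n x| ≤ b) : S.IsGreedySet x H :=
  fun h hh n hn => (h2 n hn).trans (h1 h hh)

lemma AlmostGreedyOnSets.oneSided {C : ℝ} (hC0 : 0 ≤ C) (hC : S.AlmostGreedyOnSets C) :
    S.OneSidedGreedyOnSets (C + 2 * (C * (4 * C))) := by
  intro x H a A hH hA hside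
  have hdisj : Disjoint H A := by
    rw [Finset.disjoint_left]
    intro i hi hiA
    rcases hside with h | h <;> exact lt_irrefl i (h i hiA i hi)
  set y := x - a • S.ind A with hy
  have hqg : ∀ (z : X) (B : Finset ℕ), S.IsGreedySet z B → ‖z - S.P B z‖ ≤ C * ‖z‖ :=
    fun z B hB => by simpa [P_empty] using hC z B ∅ hB (by simp)
  rcases H.eq_empty_or_nonempty with rfl | hne
  · have hAe : A = ∅ := by simpa using hA
    have hyx : y = x := by rw [hy, hAe, ind_empty, smul_zero, sub_zero]
    have h := hqg x ∅ hH
    rw [hyx]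
    exact h.trans (mul_le_mul_of_nonneg_right (by nlinarith) (norm_nonneg _))
  obtain ⟨b, hb0, hbH, hbn⟩ := hH.exists_threshold hne
  have hfy : ∀ n ∉ A, S.f n y = S.f n x := fun n hn => by
    rw [hy, map_sub, map_smul, f_ind, if_neg hn]; simp
  set D := A.filter fun n => b < |S.f n y| with hD
  set E := A.filter fun n => ¬ b < |S.f n y| with hE
  have hDE : A = D ∪ E := (Finset.filter_union_filter_not_eq _ A).symm
  have hDEdisj : Disjoint D E := Finset.disjoint_filter_filter_not A A _
  have hbHD : ∀ h ∈ H ∪ D, b ≤ |S.f h y| := fun h hh => by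
    rcases Finset.mem_union.1 hh with hh | hh
    · rw [hfy h (Finset.disjoint_left.1 hdisj hh)]; exact hbH h hh
    · exact (Finset.mem_filter.1 hh).2.le
  have hHD : S.IsGreedySet y (H ∪ D) := by
    refine isGreedySet_of_threshold hbHD fun n hn => ?_
    rw [Finset.mem_union, not_or] at hn
    by_cases hnA : n ∈ A
    · by_contra! hlt
      exact hn.2 (Finset.mem_filter.2 ⟨hnA, hlt⟩)
    · rw [hfy n hnA]; exact hbn n hn.1
  obtain ⟨F, hFcard, hAF, hF⟩ := exists_far_ind_le hC0 (fun z B F b hB hFB _ hFb => by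
    rw [← S.P_eq_smul_ind hFb]; exact hC z B F hB hFB) hHD hb0 hbHD A
  have hsmall : ∀ (z : X) (B : Finset ℕ), B ⊆ A → (∀ n ∈ B, |S.f n z| ≤ b) →
      ‖S.P B z‖ ≤ C * (4 * C) * ‖y‖ := by
    intro z B hBA hBz
    have hBF : ∀ n ∈ F, n ∉ B := fun n hn hnB => lt_irrefl n (hAF n (hBA hnB) n hn)
    have hfw : ∀ n, S.f n (S.P B z + b • S.ind F) =
        (if n ∈ B then S.f n z else 0) + b * if n ∈ F then 1 else 0 := fun n => by
      rw [map_add, map_smul, f_P, f_ind, smul_eq_mul]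
    have hfwF : ∀ n ∈ F, S.f n (S.P B z + b • S.ind F) = b := fun n hn => by
      simp [hfw, hBF n hn, hn]
    have hgreedy : S.IsGreedySet (S.P B z + b • S.ind F) F := by
      refine isGreedySet_of_threshold (b := b)
        (fun n hn => by rw [hfwF n hn]; exact le_abs_self b) fun n hn => ?_
      rw [hfw, if_neg hn, mul_zero, add_zero]
      split_ifs with hnB
      · exact hBz n hnB
      · simpa using hb0
    have hcard : B.card ≤ F.card := by
      rw [hFcard]
      exact (Finset.card_le_card hBA).trans
        (hA.trans (Finset.card_le_card Finset.subset_union_left))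
    have h := hC _ F B hgreedy hcard
    have hPB : S.P B (S.P B z + b • S.ind F) = S.P B z := S.P_congr fun n hn => by
      rw [hfw, if_pos hn, if_neg fun hnF => hBF n hnF hn, mul_zero, add_zero]
    rw [S.P_eq_smul_ind hfwF, hPB, add_sub_cancel_right, add_sub_cancel_left, norm_smul,
      Real.norm_of_nonneg hb0] at h
    exact h.trans (by rw [mul_assoc]; gcongr)
  have hx := hsmall x A subset_rfl fun n hn => hbn n (Finset.disjoint_right.1 hdisj hn)
  have hyE := hsmall y E (Finset.filter_subset _ _) fun n hn =>
    not_lt.1 (Finset.mem_filter.1 hn).2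
  have hsplit : x - S.P H x = (y - S.P (H ∪ D) y) - S.P E y + S.P A x := by
    have hDA : D ⊆ A := Finset.filter_subset _ _
    have h1 : S.P (H ∪ D) y = S.P H y + S.P D y := S.P_union (hdisj.mono_right hDA) y
    have h2 : S.P A y = S.P D y + S.P E y := by
      conv_lhs => rw [hDE]
      exact S.P_union hDEdisj y
    have h3 : S.P H y = S.P H x := S.P_congr fun n hn => hfy n (Finset.disjoint_left.1 hdisj hn)
    have h4 : S.P A y = S.P A x - a • S.ind A := by
      rw [hy, P_sub, S.P_eq_smul_ind (x := a • S.ind A) (b := a) fun n hn => by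
        rw [map_smul, f_ind, if_pos hn, smul_eq_mul, mul_one]]
    have h5 : S.P D y = S.P A x - a • S.ind A - S.P E y := by rw [← h4, h2]; abel
    rw [h1, h3, h5]
    conv_rhs => rw [hy]
    abel
  rw [hsplit]
  calc _ ≤ ‖y - S.P (H ∪ D) y‖ + ‖S.P E y‖ + ‖S.P A x‖ :=
        (norm_add_le _ _).trans (by gcongr; exact norm_sub_le _ _)
    _ ≤ C * ‖y‖ + C * (4 * C) * ‖y‖ + C * (4 * C) * ‖y‖ := by
        gcongr; exact hqg y _ hHD
    _ = (C + 2 * (C * (4 * C))) * ‖y‖ := by ring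

lemma OneSidedGreedyOnSets.almostGreedy {C : ℝ} (hC0 : 0 ≤ C) (hC : S.OneSidedGreedyOnSets C) :
    S.AlmostGreedyOnSets (C + 2 * (C * (4 * C))) := by
  intro x H A hH hA
  set y := x - S.P A x with hy
  have hqg : ∀ (z : X) (B : Finset ℕ), S.IsGreedySet z B → ‖z - S.P B z‖ ≤ C * ‖z‖ :=
    fun z B hB => by simpa using hC z B 0 ∅ hB (by simp) (by simp)
  have hfy : ∀ n, S.f n y = if n ∈ A then 0 else S.f n x := fun n => by
    rw [hy, map_sub, f_P]; split_ifs <;> simp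
  rcases H.eq_empty_or_nonempty with rfl | hne
  · have hAe : A = ∅ := by simpa using hA
    have hyx : y = x := by rw [hy, hAe, P_empty, sub_zero]
    rw [hyx]
    exact (hqg x ∅ hH).trans (mul_le_mul_of_nonneg_right (by nlinarith) (norm_nonneg _))
  obtain ⟨b, hb0, hbH, hbn⟩ := hH.exists_threshold hne
  have hbB : ∀ h ∈ H \ A, b ≤ |S.f h y| := fun h hh => by
    rw [Finset.mem_sdiff] at hh
    rw [hfy, if_neg hh.2]; exact hbH h hh.1
  have hB : S.IsGreedySet y (H \ A) := by
    refine isGreedySet_of_threshold hbB fun n hn => ?_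
    rw [hfy]
    split_ifs with hnA
    · simpa using hb0
    · exact hbn n fun hnH => hn (Finset.mem_sdiff.2 ⟨hnH, hnA⟩)
  obtain ⟨F, hFcard, hAF, hF⟩ := exists_far_ind_le hC0 (fun z B F b hB hFB hside _ =>
    hC z B b F hB hFB (Or.inr hside)) hB hb0 hbB (A \ H)
  have hind : ∀ E ⊆ A \ H, b * ‖S.ind E‖ ≤ C * (4 * C) * ‖y‖ := by
    intro E hE
    have hEF : ∀ i ∈ E, ∀ j ∈ F, i < j := fun i hi => hAF i (hE hi)
    have hFE : ∀ n ∈ F, n ∉ E := fun n hn hnE => lt_irrefl n (hEF n hnE n hn)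
    have hfw : ∀ n, S.f n (S.ind E + S.ind F) =
        (if n ∈ E then 1 else 0) + if n ∈ F then 1 else 0 := fun n => by
      rw [map_add, f_ind, f_ind]
    have hfwF : ∀ n ∈ F, S.f n (S.ind E + S.ind F) = 1 := fun n hn => by
      simp [hfw, hFE n hn, hn]
    have hgreedy : S.IsGreedySet (S.ind E + S.ind F) F := by
      refine isGreedySet_of_threshold (b := 1)
        (fun n hn => by rw [hfwF n hn]; exact le_abs_self 1) fun n hn => ?_
      rw [hfw, if_neg hn, add_zero]
      split_ifs <;> norm_num
    have hcard : E.card ≤ F.card := by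
      rw [hFcard]
      exact (Finset.card_le_card hE).trans (Finset.card_sdiff_le_card_sdiff_iff.2 hA)
    have h := hC _ F 1 E hgreedy hcard (Or.inl hEF)
    rw [S.P_eq_smul_ind hfwF, one_smul, one_smul, add_sub_cancel_right,
      add_sub_cancel_left] at h
    calc b * ‖S.ind E‖ ≤ b * (C * ‖S.ind F‖) := by gcongr
      _ = C * (b * ‖S.ind F‖) := by ring
      _ ≤ C * (4 * C * ‖y‖) := by gcongr
      _ = C * (4 * C) * ‖y‖ := by ring
  have hx : ‖S.P (A \ H) x‖ ≤ 2 * (C * (4 * C) * ‖y‖) :=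
    norm_sum_smul_le hb0 (fun i hi => hbn i (Finset.mem_sdiff.1 hi).2) hind
  have hsplit : x - S.P H x = (y - S.P (H \ A) y) + S.P (A \ H) x := by
    have h1 : S.P (H \ A) y = S.P (H \ A) x := S.P_congr fun n hn => by
      rw [hfy, if_neg (Finset.mem_sdiff.1 hn).2]
    have h2 : S.P (H \ A) x + S.P A x = S.P (A \ H) x + S.P H x := by
      rw [← S.P_union Finset.sdiff_disjoint, ← S.P_union Finset.sdiff_disjoint,
        Finset.sdiff_union_self_eq_union, Finset.sdiff_union_self_eq_union, Finset.union_comm]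
    have h3 : S.P H x = S.P (H \ A) x + S.P A x - S.P (A \ H) x := by rw [h2]; abel
    rw [h1, h3, hy]
    abel
  rw [hsplit]
  calc _ ≤ C * ‖y‖ + 2 * (C * (4 * C) * ‖y‖) :=
        (norm_add_le _ _).trans (add_le_add (hqg y _ hB) hx)
    _ = (C + 2 * (C * (4 * C))) * ‖y‖ := by ring

end SchauderBasisSys

open SchauderBasisSys

/-- A Schauder basis of a real Banach space is almost greedy if and only
if there is a constant `C` such that `‖x - G_m(x)‖ ≤ C ‖x - a·1_A‖` for every `x`, `m`,
every greedy ordering, every `a ∈ ℝ`, and every finite `A` with `|A| ≤ m` satisfying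
either `max A < α_m(x) = min Λ_m(x)` or `min A > β_m(x) = max Λ_m(x)`. -/
theorem stmt_9 {X : Type*} [NormedAddCommGroup X] [NormedSpace ℝ X] [CompleteSpace X]
    (S : SchauderBasisSys X) :
    S.AlmostGreedy ↔
      ∃ C : ℝ, ∀ (x : X) (ρ : ℕ → ℕ) (m : ℕ) (a : ℝ) (A : Finset ℕ),
        S.IsGreedyOrdering x ρ → A.card ≤ m →
        ((∀ i ∈ A, ∀ j ∈ Lam ρ m, i < j) ∨ (∀ i ∈ A, ∀ j ∈ Lam ρ m, j < i)) →
        ‖x - S.G x ρ m‖ ≤ C * ‖x - a • S.ind A‖ := by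
  rw [almostGreedy_iff, oneSidedGreedy_iff]
  constructor
  · rintro ⟨C, hC0, hC⟩
    exact ⟨_, by positivity, hC.oneSided hC0⟩
  · rintro ⟨C, hC0, hC⟩
    exact ⟨_, by positivity, hC.almostGreedy hC0⟩
end
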